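/- Let A = {x ↦ σ(x)·c : σ ∈ K, c ∈ G} ⊆ Sym(G). The normalizer of A in the symmetric group Sym(G) has order at most 2l·q³·(q² − 1), where q = p^l for the prime p; equivalently, the index of A in its normalizer in Sym(G) is at most 2l. -/

import Mathlib

/-- The Heisenberg group `H₃(F)` of upper unitriangular 3×3 matrices over `F`,
recorded by the three free entries: `x` in position (1,2), `y` in position (2,3),
`z` in position (1,3). -/
@[ext]
structure Heis (F : Type*) where
  x : F
  y : F
  z : F
deriving DecidableEq

namespace Heis

variable {F : Type*} [Field F]

/-- Multiplication corresponding to the matrix product. -/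
instance : Group (Heis F) where
  mul a b := ⟨a.x + b.x, a.y + b.y, a.z + b.z + a.x * b.y⟩
  one := ⟨0, 0, 0⟩
  inv a := ⟨-a.x, -a.y, -a.z + a.x * a.y⟩
  mul_assoc a b c := Heis.ext
    (show a.x + b.x + c.x = a.x + (b.x + c.x) by ring)
    (show a.y + b.y + c.y = a.y + (b.y + c.y) by ring)
    (show a.z + b.z + a.x * b.y + c.z + (a.x + b.x) * c.y
        = a.z + (b.z + c.z + b.x * c.y) + a.x * (b.y + c.y) by ring)
  one_mul a := Heis.ext
    (show (0 : F) + a.x = a.x by ring)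
    (show (0 : F) + a.y = a.y by ring)
    (show (0 : F) + a.z + 0 * a.y = a.z by ring)
  mul_one a := Heis.ext
    (show a.x + 0 = a.x by ring)
    (show a.y + 0 = a.y by ring)
    (show a.z + 0 + a.x * 0 = a.z by ring)
  inv_mul_cancel a := Heis.ext
    (show -a.x + a.x = 0 by ring)
    (show -a.y + a.y = 0 by ring)
    (show -a.z + a.x * a.y + a.z + -a.x * a.y = 0 by ring)

instance [Fintype F] : Fintype (Heis F) :=
  Fintype.ofEquiv (F × F × F)
    ⟨fun p => ⟨p.1, p.2.1, p.2.2⟩, fun a => (a.x, a.y, a.z), fun _ => rfl, fun _ => rfl⟩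

end Heis

/-- The element `g(x,y,z)` of the Heisenberg group. -/
def gElt {F : Type*} (x y z : F) : Heis F := ⟨x, y, z⟩

/-- The center `Z = {g(0,0,z) : z ∈ F}` of the Heisenberg group, as a set. -/
def Zset (F : Type*) [Field F] : Set (Heis F) := {g : Heis F | g.x = 0 ∧ g.y = 0}

/-- The center `Z` as a subgroup of the Heisenberg group. -/
def Zsub (F : Type*) [Field F] : Subgroup (Heis F) where
  carrier := Zset F
  mul_mem' := fun {a b} ha hb =>
    ⟨show a.x + b.x = 0 by rw [ha.1, hb.1, add_zero],
     show a.y + b.y = 0 by rw [ha.2, hb.2, add_zero]⟩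
  one_mem' := ⟨rfl, rfl⟩
  inv_mem' := fun {a} ha =>
    ⟨show -a.x = 0 by rw [ha.1, neg_zero],
     show -a.y = 0 by rw [ha.2, neg_zero]⟩

/-- `γ_i(α,β) = αβ/2 + (α² − εβ²)i`. -/
def gam {F : Type*} [Field F] (ε i α β : F) : F := α * β / 2 + (α ^ 2 - ε * β ^ 2) * i

/-- `Y_i = {g(α, β, γ_i(α,β)) : (α,β) ≠ (0,0)}`. -/
def Yset {F : Type*} [Field F] (ε i : F) : Set (Heis F) :=
  {g : Heis F | ∃ α β : F, (α, β) ≠ (0, 0) ∧ g = gElt α β (gam ε i α β)}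

/-- `X_i = Y_i ∪ {e}`. -/
def Xset {F : Type*} [Field F] (ε i : F) : Set (Heis F) := Yset ε i ∪ {1}

/-- The map `ρ(M) : G → G` attached to the matrix `M = [[α,β],[εβ,α]]`. -/
def rho {F : Type*} [Field F] (ε α β : F) : Heis F → Heis F := fun g =>
  gElt (α * g.x + ε * β * g.y) (β * g.x + α * g.y)
    (α * β * (g.x ^ 2 / 2 + ε * g.y ^ 2 / 2) + ε * β ^ 2 * g.x * g.y
      + (α ^ 2 - ε * β ^ 2) * g.z)

/-- `K = {ρ(M) : M = [[α,β],[εβ,α]], (α,β) ≠ (0,0)}`, as a set of maps `G → G`. -/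
def Kset {F : Type*} [Field F] (ε : F) : Set (Heis F → Heis F) :=
  {f | ∃ α β : F, (α, β) ≠ (0, 0) ∧ f = rho ε α β}

/-- The family of sets `{e}`, `Z \ {e}`, `Y_i` for `i ∈ F`. -/
def SFam {F : Type*} [Field F] (ε : F) : Set (Set (Heis F)) :=
  insert {1} (insert (Zset F \ {1}) {S | ∃ i : F, S = Yset ε i})

/-- `f` preserves each of the basic sets `{e}`, `Z \ {e}`, `Y_i`:
`hg⁻¹ ∈ S ↔ f(h)f(g)⁻¹ ∈ S`. -/
def Preserves {F : Type*} [Field F] (ε : F) (f : Heis F → Heis F) : Prop :=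
  ∀ S ∈ SFam ε, ∀ g h : Heis F, h * g⁻¹ ∈ S ↔ f h * (f g)⁻¹ ∈ S

/-- The set of permutations of `G` of the form `x ↦ σ(x)·c` with `σ ∈ K`, `c ∈ G`. -/
def Aset {F : Type*} [Field F] (ε : F) : Set (Equiv.Perm (Heis F)) :=
  {f | ∃ σ ∈ Kset ε, ∃ c : Heis F, ∀ x : Heis F, f x = σ x * c}

/-- The operation `ψ` on `F ∪ {∞}`, with `∞` encoded as `none`. -/
def psi {F : Type*} [Field F] [DecidableEq F] (ε : F) : Option F → Option F → Option F
  | none, j => j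
  | some i, none => some i
  | some i, some j => if i + j = 0 then none else some ((i * j + ε / 16) / (i + j))

/-- `Y_k` for `k ∈ F ∪ {∞}`, where `Y_∞ = Z \ {e}`. -/
def YInf {F : Type*} [Field F] (ε : F) : Option F → Set (Heis F)
  | some i => Yset ε i
  | none => Zset F \ {1}

lemma Heis.natCard {F : Type*} : Nat.card (Heis F) = Nat.card F ^ 3 := by
  have e : Heis F ≃ F × F × F :=
    ⟨fun a => (a.x, a.y, a.z), fun p => ⟨p.1, p.2.1, p.2.2⟩, fun _ => rfl, fun _ => rfl⟩
  rw [Nat.card_congr e, Nat.card_prod, Nat.card_prod]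
  ring

/-- The projection of the Heisenberg group onto its abelianization, identified with the
quadratic algebra `F[√ε]`. -/
def Heis.proj {F : Type*} [Zero F] (ε : F) (g : Heis F) : QuadraticAlgebra F ε 0 := ⟨g.x, g.y⟩

namespace Heis

variable {F : Type*} [Field F]

@[simp] lemma mul_x (a b : Heis F) : (a * b).x = a.x + b.x := rfl

@[simp] lemma mul_y (a b : Heis F) : (a * b).y = a.y + b.y := rfl

@[simp] lemma mul_z (a b : Heis F) : (a * b).z = a.z + b.z + a.x * b.y := rfl

@[simp] lemma one_x : (1 : Heis F).x = 0 := rfl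

@[simp] lemma one_y : (1 : Heis F).y = 0 := rfl

@[simp] lemma one_z : (1 : Heis F).z = 0 := rfl

lemma proj_mul (ε : F) (a b : Heis F) : proj ε (a * b) = proj ε a + proj ε b := rfl

lemma proj_one (ε : F) : proj ε (1 : Heis F) = 0 := rfl

lemma proj_rho (ε α β : F) (g : Heis F) :
    proj ε (rho ε α β g) = ⟨α, β⟩ * proj ε g := by
  ext <;> simp [proj, rho, gElt]
  ring

lemma proj_eq_iff {ε : F} {a b : Heis F} : proj ε a = proj ε b ↔ a.x = b.x ∧ a.y = b.y :=
  QuadraticAlgebra.ext_iff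

lemma proj_surjective (ε : F) : Function.Surjective (proj ε) := fun v => ⟨⟨v.re, v.im, 0⟩, rfl⟩

lemma rho_mul (h2 : (2 : F) ≠ 0) (ε α β : F) (a b : Heis F) :
    rho ε α β (a * b) = rho ε α β a * rho ε α β b := by
  ext <;> simp [rho, gElt] <;> field_simp <;> ring

lemma rho_one_zero (ε : F) (g : Heis F) : rho ε 1 0 g = g := by
  ext <;> simp [rho, gElt]

/-- `rho` as a group endomorphism. -/
def rhoHom (h2 : (2 : F) ≠ 0) (ε α β : F) : Heis F →* Heis F :=
  MonoidHom.mk' (rho ε α β) (rho_mul h2 ε α β)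

lemma norm_ne_zero {ε : F} (hε : ¬IsSquare ε) {α β : F} (h : (α, β) ≠ (0, 0)) :
    α ^ 2 - ε * β ^ 2 ≠ 0 := by
  intro h0
  by_cases hβ : β = 0
  · subst hβ
    simp_all
  · refine hε ⟨α / β, ?_⟩
    field_simp
    linear_combination -h0

lemma rho_injective (h2 : (2 : F) ≠ 0) {ε : F} (hε : ¬IsSquare ε) {α β : F}
    (h : (α, β) ≠ (0, 0)) : Function.Injective (rho ε α β) := by
  have hN := norm_ne_zero hε h
  refine (injective_iff_map_eq_one (rhoHom h2 ε α β)).2 fun g hg => ?_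
  have hg : rho ε α β g = 1 := hg
  have hx : α * g.x + ε * β * g.y = 0 := congrArg Heis.x hg
  have hy : β * g.x + α * g.y = 0 := congrArg Heis.y hg
  have hz := congrArg Heis.z hg
  have hx0 : g.x = 0 := by
    refine (mul_eq_zero.1 (?_ : (α ^ 2 - ε * β ^ 2) * g.x = 0)).resolve_left hN
    linear_combination α * hx - ε * β * hy
  have hy0 : g.y = 0 := by
    refine (mul_eq_zero.1 (?_ : (α ^ 2 - ε * β ^ 2) * g.y = 0)).resolve_left hN
    linear_combination α * hy - β * hx
  have hz0 : g.z = 0 := by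
    simp only [rho, gElt, hx0, hy0, one_z] at hz
    refine (mul_eq_zero.1 (?_ : (α ^ 2 - ε * β ^ 2) * g.z = 0)).resolve_left hN
    linear_combination hz
  ext <;> assumption

/-- A permutation `x ↦ ρ(M)(x)·c` acts on differences in the abelianization through powers
of `M`. -/
lemma proj_pow_sub {ε α β : F} {d : Heis F} {a : Equiv.Perm (Heis F)}
    (ha : ∀ x, a x = rho ε α β x * d) (n : ℕ) (x y : Heis F) :
    proj ε ((a ^ n) x) - proj ε ((a ^ n) y) =
      (⟨α, β⟩ : QuadraticAlgebra F ε 0) ^ n * (proj ε x - proj ε y) := by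
  induction n with
  | zero => simp
  | succ n ih =>
    rw [pow_succ', Equiv.Perm.mul_apply, Equiv.Perm.mul_apply, ha, ha, proj_mul, proj_mul,
      proj_rho, proj_rho, pow_succ', mul_assoc, ← ih]
    ring

lemma mk_pow_eq_one {ε α β : F} {d : Heis F} {a : Equiv.Perm (Heis F)}
    (ha : ∀ x, a x = rho ε α β x * d) {n : ℕ} (hn : a ^ n = 1) :
    (⟨α, β⟩ : QuadraticAlgebra F ε 0) ^ n = 1 := by
  have h := proj_pow_sub ha n ⟨1, 0, 0⟩ 1
  have h1 : proj ε (⟨1, 0, 0⟩ : Heis F) = 1 := rfl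
  simp only [hn, Equiv.Perm.one_apply, proj_one, sub_zero, h1, mul_one] at h
  exact h.symm

/-- Homomorphisms to the abelianization kill the centre. -/
lemma proj_map_eq_of_proj_eq {ε : F} (g : Heis F →* Heis F) {a b : Heis F}
    (h : proj ε a = proj ε b) : proj ε (g a) = proj ε (g b) := by
  have key : ∀ z : F, proj ε (g ⟨0, 0, z⟩) = 0 := by
    intro z
    have e : (⟨z, 0, 0⟩ : Heis F) * ⟨0, 1, 0⟩ = ⟨0, 0, z⟩ * (⟨0, 1, 0⟩ * ⟨z, 0, 0⟩) := by
      ext <;> simp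
    have := congrArg (fun t => proj ε (g t)) e
    simp only [map_mul, proj_mul] at this
    linear_combination -this
  obtain ⟨hx, hy⟩ := proj_eq_iff.1 h
  have e : a = b * ⟨0, 0, a.z - b.z⟩ := by
    ext <;> simp [hx, hy]
  rw [e, map_mul, proj_mul, key, add_zero]

/-- Two endomorphisms commuting with `ρ(-1)` and inducing the same map on the abelianization
are equal. -/
lemma monoidHom_ext (h2 : (2 : F) ≠ 0) {ε : F} {g₁ g₂ : Heis F →* Heis F}
    (hp : ∀ x, proj ε (g₁ x) = proj ε (g₂ x))
    (h₁ : ∀ x, g₁ (rho ε (-1) 0 x) = rho ε (-1) 0 (g₁ x))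
    (h₂ : ∀ x, g₂ (rho ε (-1) 0 x) = rho ε (-1) 0 (g₂ x)) : g₁ = g₂ := by
  have hx x : (g₁ x).x = (g₂ x).x := (proj_eq_iff.1 (hp x)).1
  have hy x : (g₁ x).y = (g₂ x).y := (proj_eq_iff.1 (hp x)).2
  have hmul : ∀ a b : Heis F, (g₁ (a * b)).z - (g₂ (a * b)).z =
      ((g₁ a).z - (g₂ a).z) + ((g₁ b).z - (g₂ b).z) := by
    intro a b
    simp only [map_mul, mul_z, hx, hy]
    ring
  have hZ : ∀ z : F, (g₁ ⟨0, 0, z⟩).z - (g₂ ⟨0, 0, z⟩).z = 0 := by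
    intro z
    have e : (⟨z, 0, 0⟩ : Heis F) * ⟨0, 1, 0⟩ = ⟨0, 0, z⟩ * (⟨0, 1, 0⟩ * ⟨z, 0, 0⟩) := by
      ext <;> simp
    have := congrArg (fun t => (g₁ t).z - (g₂ t).z) e
    simp only [hmul] at this
    linear_combination -this
  have hneg : ∀ x : Heis F, (g₁ (rho ε (-1) 0 x)).z - (g₂ (rho ε (-1) 0 x)).z =
      (g₁ x).z - (g₂ x).z := by
    intro x
    rw [h₁, h₂]
    simp [rho, gElt]
  refine MonoidHom.ext fun x => Heis.ext (hx x) (hy x) (sub_eq_zero.1 ?_)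
  have e : x * rho ε (-1) 0 x = ⟨0, 0, 2 * x.z - x.x * x.y⟩ := by
    ext <;> simp [rho, gElt]
    ring
  have := hmul x (rho ε (-1) 0 x)
  rw [e, hZ, hneg] at this
  refine (mul_eq_zero.1 (?_ : (2 : F) * _ = 0)).resolve_left h2
  linear_combination -this

section Normalizer

variable {ε : F} {f : Equiv.Perm (Heis F)}

/-- A permutation normalizing `A` normalizes its normal Sylow subgroup of right translations. -/
lemma exists_map_mul_right [Finite F] (hε : ¬IsSquare ε) {p l : ℕ} (hp : p.Prime)
    (hq : Nat.card F = p ^ l) [CharP F p]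
    (hf : ∀ a : Equiv.Perm (Heis F), a ∈ Aset ε ↔ f * a * f⁻¹ ∈ Aset ε) (c : Heis F) :
    ∃ d, ∀ x, f (x * c) = f x * d := by
  obtain ⟨σ, ⟨α, β, -, rfl⟩, d, hd⟩ := (hf (Equiv.mulRight c)).1
    ⟨_, ⟨1, 0, by simp, rfl⟩, c, fun x => by simp [rho_one_zero]⟩
  have hpow : (f * Equiv.mulRight c * f⁻¹) ^ p ^ (l * 3) = 1 := by
    have hc : c ^ p ^ (l * 3) = 1 := by
      rw [pow_mul, ← hq, ← natCard]
      exact pow_card_eq_one'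
    rw [conj_pow, Equiv.pow_mulRight, hc]
    ext1 x
    simp
  have hm := mk_pow_eq_one hd hpow
  have : Fact (∀ r : F, r ^ 2 ≠ ε + 0 * r) := ⟨fun r hr => hε ⟨r, by linear_combination -hr⟩⟩
  have : Fact p.Prime := ⟨hp⟩
  have : CharP (QuadraticAlgebra F ε 0) p :=
    charP_of_injective_algebraMap (algebraMap F (QuadraticAlgebra F ε 0)).injective p
  have hm1 : (⟨α, β⟩ : QuadraticAlgebra F ε 0) = 1 :=
    iterateFrobenius_inj (QuadraticAlgebra F ε 0) p (l * 3) (by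
      simpa only [iterateFrobenius_def, one_pow] using hm)
  have hα : α = 1 := congrArg QuadraticAlgebra.re hm1
  have hβ : β = 0 := congrArg QuadraticAlgebra.im hm1
  refine ⟨d, fun x => ?_⟩
  have := hd (f x)
  rw [hα, hβ, rho_one_zero] at this
  simpa using this

/-- A permutation normalizing `A` is an automorphism normalizing `K`, followed by a right
translation. -/
lemma exists_monoidHom [Finite F] (h2 : (2 : F) ≠ 0) (hε : ¬IsSquare ε) {p l : ℕ}
    (hp : p.Prime) (hq : Nat.card F = p ^ l) [CharP F p]
    (hf : ∀ a : Equiv.Perm (Heis F), a ∈ Aset ε ↔ f * a * f⁻¹ ∈ Aset ε) :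
    ∃ g : Heis F →* Heis F, (∀ x, f x = g x * f 1) ∧
      ∀ α β, (α, β) ≠ (0, 0) → ∃ α' β', ∀ x, g (rho ε α β x) = rho ε α' β' (g x) := by
  have htr : ∀ x c, f (x * c) = f x * ((f 1)⁻¹ * f c) := by
    intro x c
    obtain ⟨d, hd⟩ := exists_map_mul_right hε hp hq hf c
    rw [hd x, show f c = f 1 * d by simpa using hd 1]
    group
  refine ⟨MonoidHom.mk' (fun x => f x * (f 1)⁻¹) fun a b => by rw [htr]; group,
    fun x => by simp, fun α β h => ?_⟩
  have hinj := rho_injective h2 hε h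
  have : Finite (Heis F) := Nat.finite_of_card_ne_zero (by
    rw [natCard]
    exact pow_ne_zero _ Nat.card_pos.ne')
  obtain ⟨σ, ⟨α', β', -, rfl⟩, d, hd⟩ :=
    (hf (Equiv.ofBijective _ (Finite.injective_iff_bijective.1 hinj))).1
      ⟨_, ⟨α, β, h, rfl⟩, 1, fun x => by simp⟩
  have hd' : ∀ x, f (rho ε α β x) = rho ε α' β' (f x) * d := fun x => by
    simpa using hd (f x)
  refine ⟨α', β', fun x => ?_⟩
  have h1 := hd' 1
  rw [show rho ε α β 1 = 1 from map_one (rhoHom h2 ε α β)] at h1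
  have hinv : rho ε α' β' (f 1)⁻¹ = (rho ε α' β' (f 1))⁻¹ := map_inv (rhoHom h2 ε α' β') _
  change f (rho ε α β x) * (f 1)⁻¹ = rho ε α' β' (f x * (f 1)⁻¹)
  rw [rho_mul h2, hinv, hd', eq_mul_inv_of_mul_eq h1.symm]
  group

/-- The automorphism attached to a permutation normalizing `A` acts on the abelianization as a
semilinear map, and it commutes with `ρ(-1)`. -/
lemma exists_semilinear [Finite F] (h2 : (2 : F) ≠ 0) (hε : ¬IsSquare ε) {p l : ℕ}
    (hp : p.Prime) (hq : Nat.card F = p ^ l) [CharP F p]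
    [Fact (∀ r : F, r ^ 2 ≠ ε + 0 * r)]
    (hf : ∀ a : Equiv.Perm (Heis F), a ∈ Aset ε ↔ f * a * f⁻¹ ∈ Aset ε) :
    ∃ (g : Heis F →* Heis F) (u : (QuadraticAlgebra F ε 0)ˣ)
      (τ : QuadraticAlgebra F ε 0 →+* QuadraticAlgebra F ε 0),
      (∀ x, f x = g x * f 1) ∧ (∀ x, proj ε (g x) = u * τ (proj ε x)) ∧
      ∀ x, g (rho ε (-1) 0 x) = rho ε (-1) 0 (g x) := by
  obtain ⟨g, hg, hK⟩ := exists_monoidHom h2 hε hp hq hf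
  let h : QuadraticAlgebra F ε 0 → QuadraticAlgebra F ε 0 := fun v => proj ε (g ⟨v.re, v.im, 0⟩)
  have hh : ∀ x, proj ε (g x) = h (proj ε x) := fun x => proj_map_eq_of_proj_eq g rfl
  have hadd : ∀ v w, h (v + w) = h v + h w := by
    intro v w
    obtain ⟨a, rfl⟩ := proj_surjective ε v
    obtain ⟨b, rfl⟩ := proj_surjective ε w
    rw [← proj_mul, ← hh, ← hh, ← hh, map_mul, proj_mul]
  have h0 : h 0 = 0 := by simpa using hadd 0 0
  have hmul : ∀ m : QuadraticAlgebra F ε 0, m ≠ 0 → ∃ m', ∀ v, h (m * v) = m' * h v := by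
    intro m hm
    obtain ⟨α', β', hr⟩ := hK m.re m.im fun e => hm (QuadraticAlgebra.ext
      (congrArg Prod.fst e) (congrArg Prod.snd e))
    refine ⟨⟨α', β'⟩, fun v => ?_⟩
    obtain ⟨a, rfl⟩ := proj_surjective ε v
    rw [← proj_rho, ← hh, hr, proj_rho, hh]
  have hu : h 1 ≠ 0 := by
    intro h1
    have hz : ∀ v, h v = 0 := by
      intro v
      by_cases hv : v = 0
      · rw [hv, h0]
      · obtain ⟨m', hm'⟩ := hmul v hv
        simpa [h1] using hm' 1
    obtain ⟨y, hy⟩ := f.surjective ((⟨1, 0, 0⟩ : Heis F) * f 1)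
    rw [hg y] at hy
    have := hh y
    rw [mul_right_cancel hy, hz] at this
    exact one_ne_zero (congrArg QuadraticAlgebra.re this)
  have hmul' : ∀ m v, h (m * v) * h 1 = h m * h v := by
    intro m v
    by_cases hm : m = 0
    · simp [hm, h0]
    · obtain ⟨m', hm'⟩ := hmul m hm
      have := hm' 1
      rw [mul_one] at this
      rw [hm' v, this]
      ring
  let τ : QuadraticAlgebra F ε 0 →+* QuadraticAlgebra F ε 0 :=
    { toFun := fun v => h v / h 1
      map_one' := div_self hu
      map_mul' := fun m v => by
        field_simp
        exact hmul' m v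
      map_zero' := by simp [h0]
      map_add' := fun v w => by rw [hadd, add_div] }
  refine ⟨g, Units.mk0 (h 1) hu, τ, hg, fun x => ?_, fun x => ?_⟩
  · rw [hh]
    exact (mul_div_cancel₀ _ hu).symm
  · obtain ⟨α', β', hr⟩ := hK (-1) 0 (by simp)
    have hneg : (⟨-1, 0⟩ : QuadraticAlgebra F ε 0) = -1 := by
      ext
      · rfl
      · exact neg_zero.symm
    have e : (⟨α', β'⟩ : QuadraticAlgebra F ε 0) = ⟨-1, 0⟩ := by
      obtain ⟨a, ha⟩ := proj_surjective ε 1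
      have h1 := hh (rho ε (-1) 0 a)
      rw [hr, proj_rho, hh, proj_rho, ha, mul_one, hneg] at h1
      have h3 := hadd (-1) 1
      rw [neg_add_cancel, h0] at h3
      rw [hneg]
      refine mul_right_cancel₀ hu ?_
      linear_combination h1 - h3
    rw [hr, show α' = -1 from congrArg QuadraticAlgebra.re e,
      show β' = 0 from congrArg QuadraticAlgebra.im e]

end Normalizer

end Heis

lemma QuadraticAlgebra.natCard {R : Type*} (a b : R) :
    Nat.card (QuadraticAlgebra R a b) = Nat.card R ^ 2 := by
  rw [Nat.card_congr (QuadraticAlgebra.equivProd a b), Nat.card_prod, sq]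

/-- A field of order `p ^ n` has at most `n` ring endomorphisms. -/
lemma natCard_ringHom_le {E : Type*} [Field E] [Finite E] {p n : ℕ} [Fact p.Prime] [CharP E p]
    (h : Nat.card E = p ^ n) : Finite (E →+* E) ∧ Nat.card (E →+* E) ≤ n := by
  let _ := ZMod.algebra E p
  let e : (E →+* E) ≃ (E →ₐ[ZMod p] E) :=
    { toFun := fun τ => ⟨τ, fun r => RingHom.congr_fun (RingHom.ext_zmod
        (τ.comp (algebraMap (ZMod p) E)) (algebraMap (ZMod p) E)) r⟩
      invFun := fun τ => τ
      left_inv := fun _ => rfl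
      right_inv := fun _ => rfl }
  have hn : Module.finrank (ZMod p) E = n := by
    have := Module.natCard_eq_pow_finrank (K := ZMod p) (V := E)
    rw [h, Nat.card_zmod] at this
    exact (Nat.pow_right_injective (Fact.out : p.Prime).two_le this).symm
  refine ⟨Finite.of_equiv _ e.symm, ?_⟩
  rw [Nat.card_congr e, ← hn]
  exact card_algHom_le_finrank (ZMod p) E E

/-- Let `A = {x ↦ σ(x)·c : σ ∈ K, c ∈ G} ⊆ Sym(G)`. The normalizer of `A`
in the symmetric group `Sym(G)` has order at most `2l·q³·(q² − 1)`, where `q = p^l` for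
the prime `p`. -/
theorem statement_16 {F : Type*} [Field F] [Fintype F] (p l : ℕ) (hp : p.Prime)
    (hl : 0 < l) (hq : Fintype.card F = p ^ l)
    (hodd : Odd (Fintype.card F)) (ε : F) (hε : ¬IsSquare ε) :
    Nat.card {f : Equiv.Perm (Heis F) |
        ∀ a : Equiv.Perm (Heis F), a ∈ Aset ε ↔ f * a * f⁻¹ ∈ Aset ε}
      ≤ 2 * l * (Fintype.card F ^ 3 * (Fintype.card F ^ 2 - 1)) := by
  have : Fact p.Prime := ⟨hp⟩
  have : CharP F p := charP_of_card_eq_prime_pow hq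
  have : Fact (∀ r : F, r ^ 2 ≠ ε + 0 * r) := ⟨fun r hr => hε ⟨r, by linear_combination -hr⟩⟩
  have : CharP (QuadraticAlgebra F ε 0) p :=
    charP_of_injective_algebraMap (algebraMap F (QuadraticAlgebra F ε 0)).injective p
  have : Finite (QuadraticAlgebra F ε 0) := Finite.of_equiv _ (QuadraticAlgebra.equivProd ε 0).symm
  have h2 : (2 : F) ≠ 0 := Ring.two_ne_zero fun h =>
    (Nat.not_even_iff_odd.2 hodd) (FiniteField.even_card_iff_char_two.1 h |> Nat.even_iff.2)
  have hq' : Nat.card F = p ^ l := by rw [Nat.card_eq_fintype_card, hq]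
  obtain ⟨_, hτ⟩ := natCard_ringHom_le (E := QuadraticAlgebra F ε 0) (p := p) (n := 2 * l) (by
    rw [QuadraticAlgebra.natCard, hq', ← pow_mul, mul_comm])
  choose g u τ hg hu hneg using
    fun f : {f : Equiv.Perm (Heis F) | ∀ a, a ∈ Aset ε ↔ f * a * f⁻¹ ∈ Aset ε} =>
      Heis.exists_semilinear h2 hε hp hq' f.2
  have hinj : Function.Injective fun f => (f.1 1, u f, τ f) := by
    intro f₁ f₂ h
    obtain ⟨h1, hu', hτ'⟩ : f₁.1 1 = f₂.1 1 ∧ u f₁ = u f₂ ∧ τ f₁ = τ f₂ := by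
      simpa [Prod.ext_iff] using h
    have hgg : g f₁ = g f₂ := Heis.monoidHom_ext h2 (ε := ε)
      (fun x => by rw [hu, hu, hu', hτ']) (hneg f₁) (hneg f₂)
    exact Subtype.ext (Equiv.ext fun x => by rw [hg f₁, hg f₂, hgg, h1])
  refine (Nat.card_le_card_of_injective _ hinj).trans ?_
  rw [Nat.card_prod, Nat.card_prod, Heis.natCard, Nat.card_units, QuadraticAlgebra.natCard,
    Nat.card_eq_fintype_card]
  calc _ ≤ Fintype.card F ^ 3 * ((Fintype.card F ^ 2 - 1) * (2 * l)) := by gcongr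
    _ = _ := by ring
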